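/- arXiv:1509.08136 — 3 statements merged into one kernel-verified Lean document; each statement's English description precedes it below -/
import Mathlib

section
/- Every finite subgroup of odd order of PGL(3, ℝ) is cyclic. -/
open Matrix

/-- The projective general linear group `PGL(n, R)`: the quotient of `GL(n, R)`
by its center (the scalar matrices). -/
abbrev PGL (n : ℕ) (R : Type*) [CommRing R] : Type _ :=
  GL (Fin n) R ⧸ Subgroup.center (GL (Fin n) R)

lemma tr_sq3 (M : Matrix (Fin 3) (Fin 3) ℝ) (h : M.det = 1) :
    (M * M).trace = M.trace ^ 2 - 2 * (M⁻¹).trace := by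
  rw [Matrix.inv_def, h]
  simp [Matrix.trace, Fin.sum_univ_three, Matrix.mul_apply, Matrix.adjugate_fin_three]
  ring

lemma exists_fixed {G : Type*} [Group G] [Fintype G] (hodd : Odd (Nat.card G))
    (ρ : G →* Matrix (Fin 3) (Fin 3) ℝ) (hdet : ∀ g, (ρ g).det = 1) :
    ∃ v : Fin 3 → ℝ, v ≠ 0 ∧ ∀ g, ρ g *ᵥ v = v := by
  have hinv : ∀ g, (ρ g)⁻¹ = ρ g⁻¹ := by
    intro g
    apply Matrix.inv_eq_right_inv
    rw [← map_mul]; simp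
  have hco : (Nat.card G).Coprime 2 := hodd.coprime_two_right
  have h1 : ∑ g : G, (ρ (g ^ 2)).trace = ∑ g : G, (ρ g).trace :=
    Equiv.sum_comp (powCoprime hco) (fun g => (ρ g).trace)
  have h2 : ∑ g : G, (ρ g⁻¹).trace = ∑ g : G, (ρ g).trace :=
    Equiv.sum_comp (Equiv.inv G) (fun g => (ρ g).trace)
  have h3 : ∑ g : G, (ρ (g ^ 2)).trace
      = ∑ g : G, (ρ g).trace ^ 2 - 2 * ∑ g : G, (ρ g⁻¹).trace := by
    rw [Finset.mul_sum, ← Finset.sum_sub_distrib]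
    refine Finset.sum_congr rfl fun g _ => ?_
    rw [pow_two, map_mul, tr_sq3 _ (hdet g), hinv]
  have h4 : (ρ 1).trace ^ 2 ≤ ∑ g : G, (ρ g).trace ^ 2 :=
    Finset.single_le_sum (f := fun g => (ρ g).trace ^ 2) (fun _ _ => sq_nonneg _)
      (Finset.mem_univ 1)
  have h5 : (ρ 1).trace = 3 := by simp
  have h6 : 0 < ∑ g : G, (ρ g).trace := by
    rw [h5] at h4
    linarith
  set P : Matrix (Fin 3) (Fin 3) ℝ := ∑ g : G, ρ g with hP
  have hPn : P ≠ 0 := by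
    intro h
    rw [← Matrix.trace_sum, ← hP, h] at h6
    simp at h6
  have hfix : ∀ g, ρ g * P = P := by
    intro g
    rw [hP, Finset.mul_sum]
    simp_rw [← map_mul]
    exact Equiv.sum_comp (Equiv.mulLeft g) (fun g => ρ g)
  have : ∃ j, P.col j ≠ 0 := by
    by_contra! hc
    apply hPn
    ext i j
    exact congrFun (hc j) i
  obtain ⟨j, hj⟩ := this
  refine ⟨P.col j, hj, fun g => ?_⟩
  ext i
  have := congrFun (congrFun (hfix g) i) j
  rw [Matrix.mul_apply] at this
  simpa [Matrix.mulVec, dotProduct] using this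

lemma exists_basis (v : Fin 3 → ℝ) (hv : v ≠ 0) :
    ∃ P : Matrix (Fin 3) (Fin 3) ℝ, IsUnit P.det ∧ ∀ i, P i 0 = v i := by
  have : v 0 ≠ 0 ∨ v 1 ≠ 0 ∨ v 2 ≠ 0 := by
    by_contra! h
    apply hv
    ext i
    fin_cases i
    exacts [h.1, h.2.1, h.2.2]
  rcases this with h | h | h
  · refine ⟨!![v 0, 0, 0; v 1, 1, 0; v 2, 0, 1], ?_, ?_⟩
    · simpa [Matrix.det_fin_three] using h
    · intro i; fin_cases i <;> rfl
  · refine ⟨!![v 0, 1, 0; v 1, 0, 0; v 2, 0, 1], ?_, ?_⟩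
    · simpa [Matrix.det_fin_three] using h
    · intro i; fin_cases i <;> rfl
  · refine ⟨!![v 0, 1, 0; v 1, 0, 1; v 2, 0, 0], ?_, ?_⟩
    · simpa [Matrix.det_fin_three] using h
    · intro i; fin_cases i <;> rfl

lemma cyclic_two {G : Type*} [Group G] [Fintype G]
    (σ : G →* Matrix (Fin 2) (Fin 2) ℝ) (hdet : ∀ g, (σ g).det = 1)
    (hinj : ∀ g, σ g = 1 → g = 1) : IsCyclic G := by
  set B : Matrix (Fin 2) (Fin 2) ℝ := ∑ g : G, (σ g)ᵀ * σ g with hB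
  have hpos : B.PosDef := by
    apply Matrix.posDef_sum ⟨1, Finset.mem_univ _⟩
    intro g _
    have h := (Matrix.PosDef.one (n := Fin 2) (R := ℝ)).conjTranspose_mul_mul_same
      (B := σ g) (Matrix.mulVec_injective_of_isUnit
        ((Matrix.isUnit_iff_isUnit_det _).2 (by rw [hdet g]; exact isUnit_one)))
    simpa using h
  have hBinv : ∀ g, (σ g)ᵀ * B * σ g = B := by
    intro g
    rw [hB, Finset.mul_sum, Finset.sum_mul]
    rw [← Equiv.sum_comp (Equiv.mulRight g) (fun g => (σ g)ᵀ * σ g)]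
    refine Finset.sum_congr rfl fun x _ => ?_
    simp [Matrix.mul_assoc]
  have hr : 0 < B 1 1 := hpos.diag_pos
  have hD := hpos.det_pos
  have hsym : B 1 0 = B 0 1 := by
    have := hpos.isHermitian.apply 0 1
    simpa using this
  rw [Matrix.det_fin_two, hsym] at hD
  clear_value B
  obtain ⟨p, hp⟩ : ∃ p, B 0 0 = p := ⟨_, rfl⟩
  obtain ⟨q, hq⟩ : ∃ q, B 0 1 = q := ⟨_, rfl⟩
  obtain ⟨r, hr'⟩ : ∃ r, B 1 1 = r := ⟨_, rfl⟩
  rw [hq] at hsym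
  rw [hp, hq, hr'] at hD
  rw [hr'] at hr
  have hrel : ∀ g, r * σ g 1 0 = - σ g 0 1 * p ∧
      r * σ g 1 1 = r * σ g 0 0 - 2 * σ g 0 1 * q := by
    intro g
    have h := hBinv g
    have hd := hdet g
    rw [Matrix.det_fin_two] at hd
    have e00 := congrFun (congrFun h 0) 0
    have e01 := congrFun (congrFun h 0) 1
    have e10 := congrFun (congrFun h 1) 0
    have e11 := congrFun (congrFun h 1) 1
    simp only [Matrix.mul_apply, Fin.sum_univ_two, Matrix.transpose_apply, hp, hq, hr', hsym]
      at e00 e01 e10 e11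
    generalize σ g 0 0 = a at *
    generalize σ g 0 1 = b at *
    generalize σ g 1 0 = c at *
    generalize σ g 1 1 = d at *
    constructor
    · linear_combination (-(q * a + r * c)) * hd - b * e00 + a * e10
    · linear_combination (-(q * b + r * d)) * hd - b * e01 + a * e11
  obtain ⟨D, hD0, hD2⟩ : ∃ D : ℝ, 0 < D ∧ D ^ 2 = p * r - q ^ 2 :=
    ⟨√(p * r - q ^ 2), Real.sqrt_pos.2 (by nlinarith), Real.sq_sqrt (by nlinarith)⟩
  have hrC : (r : ℂ) ≠ 0 := by exact_mod_cast hr.ne'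
  have hD2C : (D : ℂ) ^ 2 = p * r - q ^ 2 := by exact_mod_cast hD2
  let ψ : G →* ℂ :=
    { toFun := fun g => σ g 0 0 + σ g 0 1 * (Complex.I * D - q) / r
      map_one' := by simp
      map_mul' := by
        intro g h
        obtain ⟨h1, h2⟩ := hrel h
        have h1C : (r : ℂ) * σ h 1 0 = - σ h 0 1 * p := by exact_mod_cast h1
        have h2C : (r : ℂ) * σ h 1 1 = r * σ h 0 0 - 2 * σ h 0 1 * q := by exact_mod_cast h2
        simp only [map_mul, Matrix.mul_apply, Fin.sum_univ_two]
        push_cast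
        field_simp
        have hI := Complex.I_sq
        generalize (σ h 0 0 : ℂ) = a at *
        generalize (σ h 0 1 : ℂ) = b at *
        generalize (σ h 1 0 : ℂ) = c at *
        generalize (σ h 1 1 : ℂ) = d at *
        generalize (σ g 0 0 : ℂ) = a' at *
        generalize (σ g 0 1 : ℂ) = b' at *
        linear_combination r * b' * h1C + b' * (Complex.I * D - q) * h2C
          + b' * b * hD2C - b' * b * D ^ 2 * hI }
  have hψ : ∀ g, ψ g = 1 → g = 1 := by
    intro g hg
    apply hinj
    have hg' : (σ g 0 0 : ℂ) + σ g 0 1 * (Complex.I * D - q) / r = 1 := hg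
    have hg2 : (σ g 0 0 : ℂ) * r + σ g 0 1 * (Complex.I * D - q) = r := by
      field_simp at hg'
      linear_combination hg'
    have him := congrArg Complex.im hg2
    have hre := congrArg Complex.re hg2
    simp at him hre
    have hb : σ g 0 1 = 0 := by
      rcases him with h | h
      · exact h
      · exact absurd h hD0.ne'
    obtain ⟨h1, h2⟩ := hrel g
    rw [hb] at h1 h2 hre
    have ha : σ g 0 0 = 1 := by
      apply mul_right_cancel₀ hr.ne'
      linarith
    have hc : σ g 1 0 = 0 := by
      apply mul_left_cancel₀ hr.ne'
      linarith
    have hd : σ g 1 1 = 1 := by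
      apply mul_left_cancel₀ hr.ne'
      rw [ha] at h2
      linarith
    ext i j
    fin_cases i <;> fin_cases j <;> simp [ha, hb, hc, hd]
  refine isCyclic_of_injective_ringHom ψ fun x y hxy => ?_
  have h : ψ (x * y⁻¹) = 1 := by
    rw [map_mul, hxy, ← map_mul]; simp
  exact mul_inv_eq_one.1 (hψ _ h)

lemma cyclic_of_fix0 {G : Type*} [Group G] [Fintype G]
    (ρ : G →* Matrix (Fin 3) (Fin 3) ℝ) (hdet : ∀ g, (ρ g).det = 1)
    (hinj : ∀ g, ρ g = 1 → g = 1)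
    (h0 : ∀ g, ρ g 0 0 = 1 ∧ ρ g 1 0 = 0 ∧ ρ g 2 0 = 0) : IsCyclic G := by
  let σ : G →* Matrix (Fin 2) (Fin 2) ℝ :=
    { toFun := fun g => !![ρ g 1 1, ρ g 1 2; ρ g 2 1, ρ g 2 2]
      map_one' := by
        ext i j
        fin_cases i <;> fin_cases j <;> simp
      map_mul' := by
        intro g h
        obtain ⟨h1, h2, h3⟩ := h0 g
        ext i j
        fin_cases i <;> fin_cases j <;>
          simp [Matrix.mul_apply, Fin.sum_univ_three, h1, h2, h3] }
  have hσ : ∀ g, σ g = !![ρ g 1 1, ρ g 1 2; ρ g 2 1, ρ g 2 2] := fun g => rfl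
  refine cyclic_two σ (fun g => ?_) (fun g hg => ?_)
  · have h := hdet g
    obtain ⟨h1, h2, h3⟩ := h0 g
    rw [Matrix.det_fin_three, h1, h2, h3] at h
    rw [hσ, Matrix.det_fin_two]
    simp
    linarith
  · rw [hσ] at hg
    have e00 := congrFun (congrFun hg 0) 0
    have e01 := congrFun (congrFun hg 0) 1
    have e10 := congrFun (congrFun hg 1) 0
    have e11 := congrFun (congrFun hg 1) 1
    simp at e00 e01 e10 e11
    obtain ⟨h1, h2, h3⟩ := h0 g
    have key : ∀ n : ℕ, ρ (g ^ n) = !![1, n * ρ g 0 1, n * ρ g 0 2; 0, 1, 0; 0, 0, 1] := by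
      intro n
      induction n with
      | zero =>
        ext i j
        fin_cases i <;> fin_cases j <;> simp
      | succ n ih =>
        rw [pow_succ, map_mul, ih]
        ext i j
        fin_cases i <;> fin_cases j <;>
          simp [Matrix.mul_apply, Fin.sum_univ_three, h1, h2, h3, e00, e01, e10, e11] <;> ring
    have hk := key (Nat.card G)
    rw [pow_card_eq_one', map_one] at hk
    have hN : Nat.card G ≠ 0 := by
      exact (Nat.card_pos (α := G)).ne'
    have f1 := congrFun (congrFun hk 0) 1
    have f2 := congrFun (congrFun hk 0) 2
    simp [-Nat.card_eq_fintype_card] at f1 f2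
    apply hinj
    ext i j
    fin_cases i <;> fin_cases j <;> simp [h1, h2, h3, e00, e01, e10, e11]
    · tauto
    · tauto

lemma cyclic_three {G : Type*} [Group G] [Finite G] (hodd : Odd (Nat.card G))
    (ρ : G →* Matrix (Fin 3) (Fin 3) ℝ) (hdet : ∀ g, (ρ g).det = 1)
    (hinj : ∀ g, ρ g = 1 → g = 1) : IsCyclic G := by
  have := Fintype.ofFinite G
  obtain ⟨v, hv, hfix⟩ := exists_fixed hodd ρ hdet
  obtain ⟨P, hP, hPv⟩ := exists_basis v hv
  have hPP := Matrix.mul_nonsing_inv P hP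
  have hPP' := Matrix.nonsing_inv_mul P hP
  let τ : G →* Matrix (Fin 3) (Fin 3) ℝ :=
    { toFun := fun g => P⁻¹ * ρ g * P
      map_one' := by simp [hPP']
      map_mul' := by
        intro g h
        calc P⁻¹ * ρ (g * h) * P = P⁻¹ * ρ g * 1 * ρ h * P := by simp [Matrix.mul_assoc]
          _ = _ := by rw [← hPP]; simp only [Matrix.mul_assoc] }
  have hτ : ∀ g, τ g = P⁻¹ * ρ g * P := fun g => rfl
  refine cyclic_of_fix0 τ (fun g => ?_) (fun g hg => ?_) (fun g => ?_)
  · rw [hτ, Matrix.det_mul, Matrix.det_mul, hdet, mul_one, ← Matrix.det_mul, hPP', Matrix.det_one]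
  · apply hinj
    calc ρ g = (P * P⁻¹) * ρ g * (P * P⁻¹) := by simp [hPP]
      _ = P * τ g * P⁻¹ := by rw [hτ]; simp only [Matrix.mul_assoc]
      _ = 1 := by rw [hg, mul_one, hPP]
  · have hc : ∀ i, (ρ g * P) i 0 = P i 0 := by
      intro i
      rw [Matrix.mul_apply, hPv]
      simp_rw [hPv]
      exact congrFun (hfix g) i
    have : ∀ i, τ g i 0 = (1 : Matrix (Fin 3) (Fin 3) ℝ) i 0 := by
      intro i
      rw [hτ, Matrix.mul_assoc, Matrix.mul_apply, ← hPP', Matrix.mul_apply]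
      simp_rw [hc]
    simp [this]

/-- Every finite subgroup of odd order of `PGL(3, ℝ)` is cyclic. -/
theorem odd_subgroup_PGL3_isCyclic (H : Subgroup (PGL 3 ℝ)) [Finite H]
    (hodd : Odd (Nat.card H)) : IsCyclic H := by
  let f : Matrix.SpecialLinearGroup (Fin 3) ℝ →* PGL 3 ℝ :=
    (QuotientGroup.mk' (Subgroup.center (GL (Fin 3) ℝ))).comp Matrix.SpecialLinearGroup.toGL
  have hodd3 : Odd 3 := by decide
  have hfinj : Function.Injective f := by
    rw [injective_iff_map_eq_one]
    intro g hg
    have hg' : Matrix.SpecialLinearGroup.toGL g ∈ Subgroup.center (GL (Fin 3) ℝ) :=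
      (QuotientGroup.eq_one_iff _).1 hg
    obtain ⟨a, ha⟩ := Matrix.GeneralLinearGroup.mem_center_iff_val_mem_range_scalar.1 hg'
    have ha' : g.1 = Matrix.scalar (Fin 3) a := ha.symm
    have hd := g.2
    rw [ha'] at hd
    simp at hd
    have : a = 1 := hodd3.strictMono_pow.injective (by simpa using hd)
    apply Subtype.ext
    rw [ha', this]
    simp
  have hfsurj : Function.Surjective f := by
    intro x
    obtain ⟨g, rfl⟩ := QuotientGroup.mk_surjective x
    have hdg : g.1.det ≠ 0 := (Matrix.GeneralLinearGroup.det g).ne_zero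
    obtain ⟨c, hc⟩ : ∃ c : ℝ, c ^ 3 = g.1.det := by
      rcases le_total 0 g.1.det with h | h
      · exact ⟨g.1.det ^ (1 / 3 : ℝ), by rw [← Real.rpow_natCast, ← Real.rpow_mul h]; simp⟩
      · exact ⟨-(-g.1.det) ^ (1 / 3 : ℝ), by
          rw [hodd3.neg_pow, ← Real.rpow_natCast, ← Real.rpow_mul (by linarith)]; simp⟩
    have hc0 : c ≠ 0 := by
      rintro rfl
      apply hdg
      rw [← hc]; simp
    refine ⟨⟨c⁻¹ • g.1, ?_⟩, ?_⟩
    · rw [Matrix.det_smul, ← hc]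
      simp [hc0]
    · refine QuotientGroup.eq.2 ?_
      rw [Matrix.GeneralLinearGroup.mem_center_iff_val_mem_range_scalar]
      refine ⟨c, ?_⟩
      rw [Units.val_mul]
      apply (Units.isUnit (Matrix.SpecialLinearGroup.toGL ⟨c⁻¹ • g.1, by
        rw [Matrix.det_smul, ← hc]; simp [hc0]⟩)).mul_left_cancel
      rw [Units.mul_inv_cancel_left]
      change (c⁻¹ • g.1) * Matrix.scalar (Fin 3) c = g.1
      simp [Matrix.scalar_apply, ← Matrix.smul_one_eq_diagonal, smul_smul, hc0]
  let e : H.comap f ≃* H := MulEquiv.ofBijective (f.subgroupComap H)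
    ⟨fun x y h => Subtype.ext (hfinj (congrArg Subtype.val h)),
      f.subgroupComap_surjective_of_surjective H hfsurj⟩
  have : Finite (H.comap f) := Finite.of_equiv _ e.symm.toEquiv
  have hc : Nat.card (H.comap f) = Nat.card H := Nat.card_congr e.toEquiv
  let ρ : H.comap f →* Matrix (Fin 3) (Fin 3) ℝ :=
    { toFun := fun g => g.1.1
      map_one' := rfl
      map_mul' := fun _ _ => rfl }
  have : IsCyclic (H.comap f) := cyclic_three (by rwa [hc]) ρ (fun g => g.1.2)
    (fun g hg => Subtype.ext (Subtype.ext hg))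
  exact isCyclic_of_surjective e e.surjective
end

section
/- Every finite subgroup of odd order of PGL(4, ℝ) is isomorphic to a direct product of at most two cyclic groups. -/
open Matrix

def Lm (a b c : ℝ) : Matrix (Fin 4) (Fin 4) ℝ :=
  !![0,a,b,c; -a,0,c,-b; -b,-c,0,a; -c,b,-a,0]

def starM (M : Matrix (Fin 4) (Fin 4) ℝ) : Matrix (Fin 4) (Fin 4) ℝ :=
  !![0, M 2 3, - M 1 3, M 1 2; - M 2 3, 0, M 0 3, - M 0 2; M 1 3, - M 0 3, 0, M 0 1; - M 1 2, M 0 2, -M 0 1, 0]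

lemma det4 (g : Matrix (Fin 4) (Fin 4) ℝ) : g.det =
  g 0 0 * (g 1 1 * (g 2 2 * g 3 3 - g 2 3 * g 3 2) - g 1 2 * (g 2 1 * g 3 3 - g 2 3 * g 3 1) + g 1 3 * (g 2 1 * g 3 2 - g 2 2 * g 3 1))
  - g 0 1 * (g 1 0 * (g 2 2 * g 3 3 - g 2 3 * g 3 2) - g 1 2 * (g 2 0 * g 3 3 - g 2 3 * g 3 0) + g 1 3 * (g 2 0 * g 3 2 - g 2 2 * g 3 0))
  + g 0 2 * (g 1 0 * (g 2 1 * g 3 3 - g 2 3 * g 3 1) - g 1 1 * (g 2 0 * g 3 3 - g 2 3 * g 3 0) + g 1 3 * (g 2 0 * g 3 1 - g 2 1 * g 3 0))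
  - g 0 3 * (g 1 0 * (g 2 1 * g 3 2 - g 2 2 * g 3 1) - g 1 1 * (g 2 0 * g 3 2 - g 2 2 * g 3 0) + g 1 2 * (g 2 0 * g 3 1 - g 2 1 * g 3 0)) := by
  simp [Matrix.det_succ_row_zero, Fin.sum_univ_succ, Fin.succAbove]
  ring

set_option maxHeartbeats 4000000 in
lemma star_id (g : Matrix (Fin 4) (Fin 4) ℝ) (a b c : ℝ) :
    gᵀ * starM (g * Lm a b c * gᵀ) * g = g.det • Lm a b c := by
  rw [det4]
  ext i j
  fin_cases i <;> fin_cases j <;>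
    simp [starM, Lm, Matrix.mul_apply, Fin.sum_univ_four] <;> ring


lemma two_gen {G : Type*} [CommGroup G] [Finite G] (a b : G)
    (h : ∀ g : G, ∃ k l : ℤ, g = a ^ k * b ^ l) :
    ∃ m k : ℕ, Nonempty (G ≃* Multiplicative (ZMod m) × Multiplicative (ZMod k)) := by
  let f : (Fin 2 → ℤ) →+ Additive G :=
    { toFun := fun v => Additive.ofMul (a ^ v 0 * b ^ v 1)
      map_zero' := by simp
      map_add' := by
        intro x y
        rw [← ofMul_mul]
        congr 1
        simp only [Pi.add_apply, _root_.zpow_add]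
        exact mul_mul_mul_comm _ _ _ _ }
  have hf : Function.Surjective f := by
    intro g
    obtain ⟨k, l, hkl⟩ := h g.toMul
    exact ⟨![k, l], by simp only [f]; exact congrArg Additive.ofMul hkl.symm⟩
  let F := f.toIntLinearMap
  have hF : Function.Surjective F := hf
  let e := F.quotKerEquivOfSurjective hF
  have : Finite ((Fin 2 → ℤ) ⧸ LinearMap.ker F) := Finite.of_equiv _ e.symm.toEquiv
  have hr := (Submodule.finiteQuotient_iff (LinearMap.ker F)).1 this
  let q := Submodule.quotientEquivPiZMod (LinearMap.ker F) (Pi.basisFun ℤ (Fin 2)) hr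
  let n := fun i => (Submodule.smithNormalFormCoeffs (Pi.basisFun ℤ (Fin 2)) hr i).natAbs
  let t : Additive G ≃+ Π i, ZMod (n i) := e.symm.toAddEquiv.trans q
  refine ⟨n 0, n 1, ⟨?_⟩⟩
  exact
    { toFun := fun g => (Multiplicative.ofAdd (t (Additive.ofMul g) 0), Multiplicative.ofAdd (t (Additive.ofMul g) 1))
      invFun := fun p => (t.symm (fun i => Fin.cases (motive := fun i => ZMod (n i)) p.1.toAdd (fun j => Fin.cases (motive := fun j => ZMod (n j.succ)) p.2.toAdd (fun k => k.elim0) j) i)).toMul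
      left_inv := by
        intro g
        apply Additive.ofMul.injective
        simp only [ofMul_toMul]
        rw [AddEquiv.symm_apply_eq]
        funext i
        fin_cases i <;> rfl
      right_inv := by
        rintro ⟨p, q⟩
        simp
        constructor <;> rfl
      map_mul' := by
        intro x y
        simp }

lemma of_embed {G : Type*} [Group G] [Finite G] (φ ψ : G →* ℂ)
    (hinj : ∀ g, φ g = 1 → ψ g = 1 → g = 1) :
    ∃ m k : ℕ, Nonempty (G ≃* Multiplicative (ZMod m) × Multiplicative (ZMod k)) := by
  have hcomm : ∀ x y : G, x * y = y * x := by
    have hc : ∀ (φ : G →* ℂ) (x y : G), φ (x * y * (y * x)⁻¹) = 1 := by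
      intro φ x y
      have h1 : φ (x * y) * φ ((x*y)⁻¹) = 1 := by rw [← map_mul]; simp
      have h2 : φ (y * x) * φ ((y * x)⁻¹) = 1 := by rw [← map_mul]; simp
      rw [map_mul, map_mul φ x y, mul_comm (φ x), ← map_mul]
      exact h2
    intro x y
    exact mul_inv_eq_one.1 (hinj _ (hc φ x y) (hc ψ x y))
  let _ : CommGroup G := { ‹Group G› with mul_comm := hcomm }
  have hker : IsCyclic φ.toHomUnits.ker := by
    refine isCyclic_of_injective_ringHom (R := ℂ) (ψ.comp φ.toHomUnits.ker.subtype) ?_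
    rintro ⟨x, hx⟩ ⟨y, hy⟩ hxy
    have hx1 : φ.toHomUnits (x * y⁻¹) = 1 := by
      rw [map_mul, map_inv, MonoidHom.mem_ker.1 hx, MonoidHom.mem_ker.1 hy]; simp
    have hx2 : ψ.toHomUnits (x * y⁻¹) = 1 := by
      rw [map_mul, map_inv, mul_inv_eq_one]
      exact Units.ext hxy
    exact Subtype.ext (mul_inv_eq_one.1
      (hinj _ (congrArg Units.val hx1) (congrArg Units.val hx2)))
  have : Finite φ.toHomUnits.range := Finite.of_surjective _ φ.toHomUnits.rangeRestrict_surjective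
  have hran : IsCyclic φ.toHomUnits.range := by
    refine isCyclic_of_injective_ringHom (R := ℂ) ((Units.coeHom ℂ).comp φ.toHomUnits.range.subtype) ?_
    exact Units.val_injective.comp Subtype.val_injective
  obtain ⟨⟨b, hb⟩, hb'⟩ := hker.exists_generator
  obtain ⟨⟨_, ⟨a, rfl⟩⟩, ha'⟩ := hran.exists_generator
  refine two_gen a b ?_
  intro g
  obtain ⟨k, hk⟩ := Subgroup.mem_zpowers_iff.1 (ha' ⟨_, ⟨g, rfl⟩⟩)
  have hk' : φ.toHomUnits (a ^ k) = φ.toHomUnits g := by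
    rw [map_zpow]; exact congrArg Subtype.val hk
  have hm : (a ^ k)⁻¹ * g ∈ φ.toHomUnits.ker := by
    rw [MonoidHom.mem_ker, map_mul, map_inv, hk']; simp
  obtain ⟨l, hl⟩ := Subgroup.mem_zpowers_iff.1 (hb' ⟨_, hm⟩)
  refine ⟨k, l, ?_⟩
  have := congrArg Subtype.val hl
  simp only [Subgroup.coe_zpow] at this
  rw [this]; group

lemma so3 {H : Type*} [Group H] [Finite H] (hodd : Odd (Nat.card H))
    (R : H →* Matrix (Fin 3) (Fin 3) ℝ) (hR : ∀ h, (R h)ᵀ * R h = 1) :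
    ∃ v : Fin 3 → ℝ, v ≠ 0 ∧ ∀ h, R h *ᵥ v = v := by
  classical
  have := Fintype.ofFinite H
  have hdet : ∀ h, (R h).det = 1 := by
    intro h
    have h1 : (R h).det ^ Nat.card H = 1 := by
      rw [← det_pow, ← map_pow, pow_card_eq_one', map_one, det_one]
    exact (hodd.strictMono_pow (R := ℝ)).injective (by simpa using h1)
  have htr : ∀ h, (R (h ^ 2)).trace = (R h).trace ^ 2 - 2 * (R h).trace := by
    intro h
    have hadj : adjugate (R h) = (R h)ᵀ := by
      have := mul_adjugate (R h)
      rw [hdet, one_smul] at this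
      calc adjugate (R h) = ((R h)ᵀ * R h) * adjugate (R h) := by rw [hR, one_mul]
        _ = _ := by rw [mul_assoc, this, mul_one]
    have h2 : (adjugate (R h)).trace = (R h).trace := by rw [hadj, trace_transpose]
    rw [map_pow]
    rw [adjugate_fin_three] at h2
    simp [trace, Fin.sum_univ_three, pow_two, mul_apply] at h2 ⊢
    linarith
  by_contra hcon
  push Not at hcon
  have hS : ∑ h, R h = 0 := by
    ext i j
    by_contra hij
    obtain ⟨h, hh⟩ := hcon (fun i => (∑ h, R h) i j) (fun h0 => hij (by simpa using congrFun h0 i))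
    apply hh
    have : R h * ∑ k, R k = ∑ k, R k := by
      rw [Finset.mul_sum]
      simp_rw [← map_mul]
      exact Fintype.sum_equiv (Equiv.mulLeft h) _ _ (fun _ => rfl)
    funext i
    exact congrFun (congrFun this i) j
  have hT : ∑ h, (R h).trace = 0 := by rw [← trace_sum, hS, trace_zero]
  have hT2 : ∑ h, (R (h ^ 2)).trace = 0 := by
    rw [← hT]
    refine Fintype.sum_equiv (powCoprime (G := H) (n := 2) ?_) _ _ (fun _ => rfl)
    exact hodd.coprime_two_right
  simp_rw [htr, Finset.sum_sub_distrib, ← Finset.mul_sum, hT] at hT2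
  have h0 := (Finset.sum_eq_zero_iff_of_nonneg (fun i _ => sq_nonneg (R i).trace)).1 (by simpa using hT2) 1 (Finset.mem_univ _)
  simp at h0


lemma key_inj (J : Matrix (Fin 4) (Fin 4) ℝ) (hJ : J * J = -1) (e : Fin 4 → ℝ) (he : e ≠ 0)
    (a b : ℝ) (h : a • e + b • (J *ᵥ e) = 0) : a = 0 ∧ b = 0 := by
  have h2 : a • (J *ᵥ e) - b • e = 0 := by
    have := congrArg (fun x => J *ᵥ x) h
    simp only [mulVec_add, mulVec_smul, mulVec_mulVec, hJ, mulVec_zero, neg_mulVec, one_mulVec] at this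
    rw [← this]; module
  have h3 : (a ^ 2 + b ^ 2) • e = 0 := by
    have : (a ^ 2 + b ^ 2) • e = a • (a • e + b • (J *ᵥ e)) - b • (a • (J *ᵥ e) - b • e) := by
      module
    rw [this, h, h2]; simp
  have h4 : a ^ 2 + b ^ 2 = 0 := (smul_eq_zero.1 h3).resolve_right he
  constructor <;> nlinarith [sq_nonneg a, sq_nonneg b]

lemma chi {H : Type*} [Group H] (A : H → Matrix (Fin 4) (Fin 4) ℝ)
    (h1 : A 1 = 1 ∨ A 1 = -1)
    (hmul : ∀ h k, A h * A k = A (h * k) ∨ A h * A k = - A (h * k))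
    (J : Matrix (Fin 4) (Fin 4) ℝ) (hJ : J * J = -1) (hc : ∀ h, A h * J = J * A h)
    (e : Fin 4 → ℝ) (he : e ≠ 0) (hs : ∀ h, ∃ a b : ℝ, A h *ᵥ e = a • e + b • (J *ᵥ e)) :
    ∃ χ : H →* ℂ, ∀ h, χ h = 1 → (A h * A h) *ᵥ e = e := by
  choose a b hab using hs
  let act : ℂ → Fin 4 → ℝ := fun z => z.re • e + z.im • (J *ᵥ e)
  have hact : Function.Injective act := by
    intro z w hzw
    have : (z.re - w.re) • e + (z.im - w.im) • (J *ᵥ e) = 0 := by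
      have h' : act z - act w = 0 := sub_eq_zero.2 hzw
      rw [← h']; simp only [act]; module
    obtain ⟨h1, h2⟩ := key_inj J hJ e he _ _ this
    exact Complex.ext (by linarith) (by linarith)
  have hneg : ∀ z, act (-z) = - act z := by
    intro z; simp only [act, Complex.neg_re, Complex.neg_im]; module
  have hact1 : act 1 = e := by simp [act]
  let z : H → ℂ := fun h => ⟨a h, b h⟩
  have hz : ∀ h, A h *ᵥ e = act (z h) := hab
  have hA : ∀ h w, A h *ᵥ act w = act (z h * w) := by
    intro h w
    have e1 : A h *ᵥ (J *ᵥ e) = J *ᵥ (A h *ᵥ e) := by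
      rw [mulVec_mulVec, hc, ← mulVec_mulVec]
    simp only [act, mulVec_add, mulVec_smul, e1, hab]
    simp only [mulVec_mulVec, hJ, neg_mulVec, one_mulVec, z, Complex.mul_re, Complex.mul_im]
    module
  have hzz : ∀ h k, (A h * A k) *ᵥ e = act (z h * z k) := by
    intro h k
    rw [← mulVec_mulVec, hz, hA]
  have hzm : ∀ h k, (z h * z k) ^ 2 = z (h * k) ^ 2 := by
    intro h k
    have h3 := hzz h k
    rcases hmul h k with h2 | h2
    · rw [h2, hz] at h3
      rw [hact h3]
    · rw [h2, neg_mulVec, hz, ← hneg] at h3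
      rw [← hact h3]; ring
  refine ⟨{ toFun := fun h => z h ^ 2, map_one' := ?_, map_mul' := ?_ }, ?_⟩
  · have h3 := hz 1
    rcases h1 with h1 | h1
    · rw [h1, one_mulVec] at h3
      rw [← hact (hact1.trans h3)]; simp
    · rw [h1, neg_mulVec, one_mulVec] at h3
      nth_rewrite 1 [← hact1] at h3
      rw [← hneg] at h3
      rw [← hact h3]; simp
  · intro h k
    rw [← hzm, mul_pow]
  · intro h hh
    rw [hzz, ← pow_two]
    have : z h ^ 2 = 1 := hh
    rw [this, hact1]

lemma split_embed {H : Type*} [Group H] (A : H → Matrix (Fin 4) (Fin 4) ℝ)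
    (h1 : A 1 = 1 ∨ A 1 = -1)
    (hmul : ∀ h k, A h * A k = A (h * k) ∨ A h * A k = - A (h * k))
    (J K : Matrix (Fin 4) (Fin 4) ℝ) (hJ : J * J = -1) (hK : K * K = -1) (hJK : J * K = K * J)
    (hn1 : J * K ≠ 1) (hn2 : J * K ≠ -1)
    (hcJ : ∀ h, A h * J = J * A h) (hcK : ∀ h, A h * K = K * A h) :
    ∃ φ ψ : H →* ℂ, ∀ h, φ h = 1 → ψ h = 1 → A h * A h = 1 := by
  set T := J * K with hT
  have hTT : T * T = 1 := by
    calc T * T = J * (K * J) * K := by simp only [hT, mul_assoc]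
      _ = (J * J) * (K * K) := by rw [← hJK, hT]; simp only [mul_assoc]
      _ = 1 := by rw [hJ, hK]; simp
  have hTJ : T * J = J * T := by rw [hT, mul_assoc, ← hJK]
  have hcT : ∀ h, A h * T = T * A h := by
    intro h; rw [hT, ← mul_assoc, hcJ, mul_assoc, hcK, mul_assoc]
  obtain ⟨e, he, hTe⟩ : ∃ e : Fin 4 → ℝ, e ≠ 0 ∧ T *ᵥ e = e := by
    by_contra hcon
    push Not at hcon
    apply hn2
    rw [← sub_eq_zero, sub_neg_eq_add]
    apply Matrix.ext_of_mulVec_single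
    intro i
    by_contra hne
    rw [zero_mulVec] at hne
    apply hcon _ hne
    rw [mulVec_mulVec, mul_add, hTT, mul_one, add_comm]
  obtain ⟨f, hf, hTf⟩ : ∃ e : Fin 4 → ℝ, e ≠ 0 ∧ T *ᵥ e = -e := by
    by_contra hcon
    push Not at hcon
    apply hn1
    rw [← sub_eq_zero]
    apply Matrix.ext_of_mulVec_single
    intro i
    by_contra hne
    rw [zero_mulVec] at hne
    apply hcon _ hne
    rw [mulVec_mulVec, mul_sub, hTT, mul_one, ← neg_mulVec, neg_sub]
  have hTJe : T *ᵥ (J *ᵥ e) = J *ᵥ e := by rw [mulVec_mulVec, hTJ, ← mulVec_mulVec, hTe]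
  have hTJf : T *ᵥ (J *ᵥ f) = - (J *ᵥ f) := by
    rw [mulVec_mulVec, hTJ, ← mulVec_mulVec, hTf, mulVec_neg]
  have hTx : ∀ a b c d : ℝ, T *ᵥ (a • e + b • (J *ᵥ e) + c • f + d • (J *ᵥ f)) =
      a • e + b • (J *ᵥ e) - c • f - d • (J *ᵥ f) := by
    intro a b c d
    simp only [mulVec_add, mulVec_smul, hTe, hTf, hTJe, hTJf]
    module
  have hli : LinearIndependent ℝ ![e, J *ᵥ e, f, J *ᵥ f] := by
    rw [Fintype.linearIndependent_iff]
    intro g hg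
    simp only [Fin.sum_univ_four, cons_val] at hg
    have h2 := hTx (g 0) (g 1) (g 2) (g 3)
    rw [hg, mulVec_zero] at h2
    have h3 : g 0 • e + g 1 • (J *ᵥ e) = 0 := by
      have : g 0 • e + g 1 • (J *ᵥ e) = (1 / 2 : ℝ) • ((g 0 • e + g 1 • (J *ᵥ e) + g 2 • f + g 3 • (J *ᵥ f)) +
        (g 0 • e + g 1 • (J *ᵥ e) - g 2 • f - g 3 • (J *ᵥ f))) := by module
      rw [this, hg, ← h2]; simp
    have h4 : g 2 • f + g 3 • (J *ᵥ f) = 0 := by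
      have : g 2 • f + g 3 • (J *ᵥ f) = (1 / 2 : ℝ) • ((g 0 • e + g 1 • (J *ᵥ e) + g 2 • f + g 3 • (J *ᵥ f)) -
        (g 0 • e + g 1 • (J *ᵥ e) - g 2 • f - g 3 • (J *ᵥ f))) := by module
      rw [this, hg, ← h2]; simp
    obtain ⟨a0, a1⟩ := key_inj J hJ e he _ _ h3
    obtain ⟨a2, a3⟩ := key_inj J hJ f hf _ _ h4
    intro i; fin_cases i <;> assumption
  have hspan : ∀ x : Fin 4 → ℝ, ∃ a b c d : ℝ, x = a • e + b • (J *ᵥ e) + c • f + d • (J *ᵥ f) := by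
    intro x
    let B := basisOfLinearIndependentOfCardEqFinrank hli (by simp)
    have := B.sum_repr x
    simp only [B, coe_basisOfLinearIndependentOfCardEqFinrank, Fin.sum_univ_four, cons_val] at this
    exact ⟨_, _, _, _, this.symm⟩
  have hse : ∀ h, ∃ a b : ℝ, A h *ᵥ e = a • e + b • (J *ᵥ e) := by
    intro h
    obtain ⟨a, b, c, d, hx⟩ := hspan (A h *ᵥ e)
    have h2 := hTx a b c d
    rw [← hx, mulVec_mulVec, ← hcT, ← mulVec_mulVec, hTe] at h2
    refine ⟨a, b, ?_⟩
    have : A h *ᵥ e = (1 / 2 : ℝ) • (A h *ᵥ e + A h *ᵥ e) := by module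
    rw [this]; nth_rewrite 1 [hx]; rw [h2]; module
  have hsf : ∀ h, ∃ a b : ℝ, A h *ᵥ f = a • f + b • (J *ᵥ f) := by
    intro h
    obtain ⟨a, b, c, d, hx⟩ := hspan (A h *ᵥ f)
    have h2 := hTx a b c d
    rw [← hx, mulVec_mulVec, ← hcT, ← mulVec_mulVec, hTf, mulVec_neg] at h2
    refine ⟨c, d, ?_⟩
    have : A h *ᵥ f = (1 / 2 : ℝ) • (A h *ᵥ f - -(A h *ᵥ f)) := by module
    rw [this]; rw [h2]; rw [hx]; module
  obtain ⟨φ, hφ⟩ := chi A h1 hmul J hJ hcJ e he hse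
  obtain ⟨ψ, hψ⟩ := chi A h1 hmul J hJ hcJ f hf hsf
  refine ⟨φ, ψ, fun h h2 h3 => ?_⟩
  have e1 := hφ h h2
  have e2 := hψ h h3
  have hcc : A h * A h * J = J * (A h * A h) := by
    rw [mul_assoc, hcJ, ← mul_assoc, hcJ, mul_assoc]
  have e3 : (A h * A h) *ᵥ (J *ᵥ e) = J *ᵥ e := by
    rw [mulVec_mulVec, hcc, ← mulVec_mulVec, e1]
  have e4 : (A h * A h) *ᵥ (J *ᵥ f) = J *ᵥ f := by
    rw [mulVec_mulVec, hcc, ← mulVec_mulVec, e2]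
  apply Matrix.ext_of_mulVec_single
  intro i
  rw [one_mulVec]
  obtain ⟨a, b, c, d, hx⟩ := hspan (Pi.single i 1)
  rw [hx]
  simp only [mulVec_add, mulVec_smul, e1, e2, e3, e4]

def Lv (v : Fin 3 → ℝ) : Matrix (Fin 4) (Fin 4) ℝ := Lm (v 0) (v 1) (v 2)

lemma Lv_sq (v : Fin 3 → ℝ) : Lv v * Lv v = (-(v ⬝ᵥ v)) • (1 : Matrix (Fin 4) (Fin 4) ℝ) := by
  ext i j
  fin_cases i <;> fin_cases j <;>
    simp [Lv, Lm, Matrix.mul_apply, Fin.sum_univ_four, dotProduct, Fin.sum_univ_three] <;> ring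

def rv (M : Matrix (Fin 4) (Fin 4) ℝ) : Fin 3 → ℝ := ![M 0 1, M 0 2, M 0 3]

lemma rv_Lv (v : Fin 3 → ℝ) : rv (Lv v) = v := by
  funext i; fin_cases i <;> simp [rv, Lv, Lm]

lemma Lv_add (v w : Fin 3 → ℝ) : Lv (v + w) = Lv v + Lv w := by
  ext i j; fin_cases i <;> fin_cases j <;> simp [Lv, Lm] <;> ring

lemma Lv_smul (c : ℝ) (w : Fin 3 → ℝ) : Lv (c • w) = c • Lv w := by
  ext i j; fin_cases i <;> fin_cases j <;> simp [Lv, Lm]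

lemma conj_Lv (g : Matrix (Fin 4) (Fin 4) ℝ) (hg : gᵀ * g = 1) (hd : g.det = 1)
    (v : Fin 3 → ℝ) : g * Lv v * gᵀ = Lv (rv (g * Lv v * gᵀ)) := by
  have hg' : g * gᵀ = 1 := mul_eq_one_comm.1 hg
  have h := star_id g (v 0) (v 1) (v 2)
  rw [hd, one_smul] at h
  change gᵀ * starM (g * Lv v * gᵀ) * g = Lv v at h
  have h2 : starM (g * Lv v * gᵀ) = g * Lv v * gᵀ := by
    calc starM (g * Lv v * gᵀ) = (g * gᵀ) * starM (g * Lv v * gᵀ) * (g * gᵀ) := by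
          rw [hg']; simp
      _ = g * (gᵀ * starM (g * Lv v * gᵀ) * g) * gᵀ := by noncomm_ring
      _ = _ := by rw [h]
  generalize g * Lv v * gᵀ = M at h2
  have hh : ∀ i j, starM M i j = M i j := fun i j => by rw [h2]
  have h00 := hh 0 0
  have h01 := hh 0 1
  have h02 := hh 0 2
  have h03 := hh 0 3
  have h10 := hh 1 0
  have h11 := hh 1 1
  have h12 := hh 1 2
  have h13 := hh 1 3
  have h20 := hh 2 0
  have h21 := hh 2 1
  have h22 := hh 2 2
  have h23 := hh 2 3
  have h30 := hh 3 0
  have h31 := hh 3 1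
  have h32 := hh 3 2
  have h33 := hh 3 3
  simp [starM] at h00 h01 h02 h03 h10 h11 h12 h13 h20 h21 h22 h23 h30 h31 h32 h33
  ext i j
  fin_cases i <;> fin_cases j <;> simp [Lv, Lm, rv] <;> linarith

lemma exists_fixed_s5 {H : Type*} [Group H] [Finite H] (hodd : Odd (Nat.card H))
    (A : H → Matrix (Fin 4) (Fin 4) ℝ) (h1 : A 1 = 1 ∨ A 1 = -1)
    (hmul : ∀ h k, A h * A k = A (h * k) ∨ A h * A k = - A (h * k))
    (hO : ∀ h, (A h)ᵀ * A h = 1) (hd : ∀ h, (A h).det = 1) :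
    ∃ v : Fin 3 → ℝ, v ⬝ᵥ v = 1 ∧ ∀ h, A h * Lv v = Lv v * A h := by
  let Rl : H → ((Fin 3 → ℝ) →ₗ[ℝ] (Fin 3 → ℝ)) := fun h =>
    { toFun := fun v => rv (A h * Lv v * (A h)ᵀ)
      map_add' := by
        intro v w
        rw [Lv_add, mul_add, add_mul]
        funext i; fin_cases i <;> simp [rv]
      map_smul' := by
        intro c v
        rw [Lv_smul, mul_smul_comm, smul_mul_assoc]
        funext i; fin_cases i <;> simp [rv] }
  have hRl : ∀ h v, Lv (Rl h v) = A h * Lv v * (A h)ᵀ := fun h v =>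
    (conj_Lv (A h) (hO h) (hd h) v).symm
  have hinj : Function.Injective Lv := fun v w h => by rw [← rv_Lv v, h, rv_Lv]
  have hR1 : Rl 1 = 1 := by
    ext1 v
    apply LinearMap.ext; intro x
    apply hinj
    simp only [LinearMap.comp_apply]
    rw [hRl]
    rcases h1 with h1 | h1 <;> rw [h1] <;> simp
  have hRm : ∀ h k, Rl (h * k) = Rl h * Rl k := by
    intro h k
    apply LinearMap.ext; intro v
    apply hinj
    rw [Module.End.mul_apply, hRl, hRl, hRl]
    have : A h * (A k * Lv v * (A k)ᵀ) * (A h)ᵀ = (A h * A k) * Lv v * (A h * A k)ᵀ := by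
      rw [transpose_mul]; noncomm_ring
    rw [this]
    rcases hmul h k with h2 | h2 <;> rw [h2] <;> simp
  have hnorm : ∀ h v, Rl h v ⬝ᵥ Rl h v = v ⬝ᵥ v := by
    intro h v
    have h2 := Lv_sq (Rl h v)
    rw [hRl] at h2
    have h3 : A h * Lv v * (A h)ᵀ * (A h * Lv v * (A h)ᵀ) = A h * (Lv v * ((A h)ᵀ * A h) * Lv v) * (A h)ᵀ := by
      noncomm_ring
    rw [h3, hO, mul_one, Lv_sq, mul_smul_comm, smul_mul_assoc, mul_one, mul_eq_one_comm.1 (hO h)] at h2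
    have := congrFun (congrFun h2 0) 0
    simp at this
    linarith
  let R : H →* Matrix (Fin 3) (Fin 3) ℝ :=
    { toFun := fun h => LinearMap.toMatrix' (Rl h)
      map_one' := by rw [hR1]; exact LinearMap.toMatrix'_one
      map_mul' := by intro h k; rw [hRm]; exact LinearMap.toMatrix'_mul _ _ }
  have hRv : ∀ h v, R h *ᵥ v = Rl h v := fun h v => LinearMap.toMatrix'_mulVec _ _
  have hRo : ∀ h, (R h)ᵀ * R h = 1 := by
    intro h
    have hip : ∀ v w, Rl h v ⬝ᵥ Rl h w = v ⬝ᵥ w := by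
      intro v w
      have e1 := hnorm h (v + w)
      have e2 := hnorm h v
      have e3 := hnorm h w
      simp only [map_add, dotProduct_add, add_dotProduct] at e1
      rw [dotProduct_comm (Rl h w) (Rl h v), dotProduct_comm w v] at e1
      linarith
    ext i j
    have e1 := hip (Pi.single i 1) (Pi.single j 1)
    rw [← hRv, ← hRv, mulVec_single_one, mulVec_single_one] at e1
    have e2 : ((R h)ᵀ * R h) i j = (R h).col i ⬝ᵥ (R h).col j := rfl
    rw [e2, e1, single_one_dotProduct, one_apply, Pi.single_apply]
  obtain ⟨v, hv, hfix⟩ := so3 hodd R hRo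
  have hpos : 0 < v ⬝ᵥ v := by
    have := dotProduct_star_self_pos_iff (v := v)
    simpa using this.2 hv
  refine ⟨(Real.sqrt (v ⬝ᵥ v))⁻¹ • v, ?_, ?_⟩
  · rw [smul_dotProduct, dotProduct_smul, smul_eq_mul, smul_eq_mul, ← mul_assoc, ← mul_inv,
      Real.mul_self_sqrt hpos.le, inv_mul_cancel₀ hpos.ne']
  · intro h
    have e1 := hRl h v
    rw [← hRv, hfix] at e1
    rw [Lv_smul, mul_smul_comm, smul_mul_assoc]
    congr 1
    rw [e1]
    have : A h * Lv v * (A h)ᵀ * A h = A h * Lv v := by rw [mul_assoc, hO, mul_one]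
    rw [← e1, ← this, ← e1]

def Dm : Matrix (Fin 4) (Fin 4) ℝ := diagonal ![1, 1, 1, -1]

lemma Dm_sq : Dm * Dm = 1 := by
  rw [Dm, diagonal_mul_diagonal, ← diagonal_one]
  congr 1
  funext i; fin_cases i <;> simp

lemma Dm_tr : Dmᵀ = Dm := by simp [Dm]

def Kv (v : Fin 3 → ℝ) : Matrix (Fin 4) (Fin 4) ℝ :=
  !![0, v 0, v 1, -v 2; -v 0, 0, v 2, v 1; -v 1, -v 2, 0, -v 0; v 2, -v 1, v 0, 0]

lemma Kv_eq (v : Fin 3 → ℝ) : Kv v = Dm * Lv v * Dm := by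
  ext i j
  fin_cases i <;> fin_cases j <;> simp [Kv, Dm, Lv, Lm]

lemma Lv_Kv (v w : Fin 3 → ℝ) : Lv v * Kv w = Kv w * Lv v := by
  ext i j
  fin_cases i <;> fin_cases j <;>
    simp [Kv, Lv, Lm, Matrix.mul_apply, Fin.sum_univ_four] <;> ring

lemma Lv_ne (v w : Fin 3 → ℝ) (hv : v ⬝ᵥ v = 1) : Lv v ≠ Kv w := by
  intro h
  have hh : ∀ i j, Lv v i j = Kv w i j := fun i j => by rw [h]
  have a1 := hh 0 1
  have a2 := hh 2 3
  have b1 := hh 0 2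
  have b2 := hh 1 3
  have c1 := hh 0 3
  have c2 := hh 1 2
  simp [Lv, Lm, Kv] at a1 a2 b1 b2 c1 c2
  have a : v 0 = 0 := by linarith
  have b : v 1 = 0 := by linarith
  have c : v 2 = 0 := by linarith
  simp [dotProduct, Fin.sum_univ_three, a, b, c] at hv

lemma orth_embed {H : Type*} [Group H] [Finite H] (hodd : Odd (Nat.card H))
    (A : H → Matrix (Fin 4) (Fin 4) ℝ) (h1 : A 1 = 1 ∨ A 1 = -1)
    (hmul : ∀ h k, A h * A k = A (h * k) ∨ A h * A k = - A (h * k))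
    (hO : ∀ h, (A h)ᵀ * A h = 1) (hd : ∀ h, (A h).det = 1) :
    ∃ φ ψ : H →* ℂ, ∀ h, φ h = 1 → ψ h = 1 → A h * A h = 1 := by
  obtain ⟨v, hv, hcv⟩ := exists_fixed_s5 hodd A h1 hmul hO hd
  have hDD : ∀ X Y : Matrix (Fin 4) (Fin 4) ℝ, Dm * X * Dm * (Dm * Y * Dm) = Dm * (X * Y) * Dm := by
    intro X Y
    calc Dm * X * Dm * (Dm * Y * Dm) = Dm * X * (Dm * Dm) * Y * Dm := by simp only [mul_assoc]
      _ = _ := by rw [Dm_sq]; simp only [mul_assoc, one_mul]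
  have hDD' : ∀ X : Matrix (Fin 4) (Fin 4) ℝ, Dm * (Dm * X * Dm) * Dm = X := by
    intro X
    calc Dm * (Dm * X * Dm) * Dm = (Dm * Dm) * X * (Dm * Dm) := by simp only [mul_assoc]
      _ = _ := by rw [Dm_sq]; simp
  obtain ⟨w, hw, hcw⟩ := exists_fixed_s5 hodd (fun h => Dm * A h * Dm)
    (by rcases h1 with h1 | h1 <;> simp [h1, Dm_sq])
    (by
      intro h k
      simp only [hDD]
      rcases hmul h k with h2 | h2 <;> rw [h2] <;> simp)
    (by
      intro h
      simp only [transpose_mul, Dm_tr]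
      rw [← mul_assoc Dm, hDD, hO]; simp [Dm_sq])
    (by
      intro h
      have : Dm.det * Dm.det = 1 := by rw [← det_mul, Dm_sq, det_one]
      rw [det_mul, det_mul, hd, mul_one, this])
  have hJ : Lv v * Lv v = -1 := by rw [Lv_sq, hv]; simp
  refine split_embed A h1 hmul (Lv v) (Kv w) hJ ?_ (Lv_Kv v w) ?_ ?_ hcv ?_
  · rw [Kv_eq, hDD, Lv_sq, hw]; simp [Dm_sq]
  · intro h
    apply Lv_ne v (-w) hv
    have h2 : Kv (-w) = - Kv w := by
      ext i j
      fin_cases i <;> fin_cases j <;> simp [Kv]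
    have h3 : Lv v * (Lv v * Kv w) = Lv v := by rw [h, mul_one]
    rw [← mul_assoc, hJ, neg_one_mul] at h3
    rw [h2, h3]
  · intro h
    apply Lv_ne v w hv
    have h3 : Lv v * (Lv v * Kv w) = - Lv v := by rw [h]; simp
    rw [← mul_assoc, hJ, neg_one_mul] at h3
    exact (neg_injective h3).symm
  · intro h
    have h2 := congrArg (fun X => Dm * X * Dm) (hcw h)
    have e : Lv w = Dm * Kv w * Dm := by rw [Kv_eq, hDD']
    rw [e, hDD, hDD, hDD', hDD'] at h2
    exact h2

open scoped MatrixOrder in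
lemma sl_embed {H : Type*} [Group H] [Finite H] (hodd : Odd (Nat.card H))
    (A : H → Matrix (Fin 4) (Fin 4) ℝ) (h1 : A 1 = 1 ∨ A 1 = -1)
    (hmul : ∀ h k, A h * A k = A (h * k) ∨ A h * A k = - A (h * k))
    (hd : ∀ h, (A h).det = 1) :
    ∃ φ ψ : H →* ℂ, ∀ h, φ h = 1 → ψ h = 1 → A h * A h = 1 := by
  classical
  let _ := Fintype.ofFinite H
  let P := ∑ h, (A h)ᵀ * A h
  have hinv : ∀ k, (A k)ᵀ * P * A k = P := by
    intro k
    simp only [P, Finset.mul_sum, Finset.sum_mul]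
    refine Fintype.sum_equiv (Equiv.mulRight k) _ _ (fun h => ?_)
    have : (A k)ᵀ * ((A h)ᵀ * A h) * A k = (A h * A k)ᵀ * (A h * A k) := by
      rw [transpose_mul]; simp only [mul_assoc]
    rw [this]
    rcases hmul h k with h2 | h2 <;> rw [h2] <;> simp
  have hpd : P.PosDef := by
    refine Matrix.posDef_sum ⟨1, Finset.mem_univ _⟩ (fun h _ => ?_)
    have := Matrix.PosDef.conjTranspose_mul_self (A h) ?_
    · simpa using this
    · rw [Matrix.mulVec_injective_iff_isUnit, Matrix.isUnit_iff_isUnit_det, hd]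
      exact isUnit_one
  obtain ⟨S, hS⟩ : ∃ S : Matrix (Fin 4) (Fin 4) ℝ, P = Sᵀ * S := by
    obtain ⟨S, hS⟩ := CStarAlgebra.nonneg_iff_eq_star_mul_self.mp hpd.posSemidef.nonneg
    exact ⟨S, by simpa [star_eq_conjTranspose] using hS⟩
  have hSu : IsUnit S.det := by
    have := hpd.det_pos
    rw [hS, det_mul] at this
    exact isUnit_iff_ne_zero.2 (right_ne_zero_of_mul this.ne')
  have hS1 := nonsing_inv_mul S hSu
  have hS2 := mul_nonsing_inv S hSu
  have hSS : ∀ X Y, S * X * S⁻¹ * (S * Y * S⁻¹) = S * (X * Y) * S⁻¹ := by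
    intro X Y
    calc S * X * S⁻¹ * (S * Y * S⁻¹) = S * X * (S⁻¹ * S) * Y * S⁻¹ := by simp only [mul_assoc]
      _ = _ := by rw [hS1]; simp only [mul_assoc, one_mul]
  obtain ⟨φ, ψ, h⟩ := orth_embed hodd (fun h => S * A h * S⁻¹)
    (by rcases h1 with h1 | h1 <;> simp [h1, hS2])
    (by
      intro h k
      simp only [hSS]
      rcases hmul h k with h2 | h2 <;> rw [h2] <;> simp)
    (by
      intro h
      have h2 : (S * A h * S⁻¹)ᵀ * (S * A h * S⁻¹) = (S⁻¹)ᵀ * ((A h)ᵀ * (Sᵀ * S) * A h) * S⁻¹ := by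
        simp only [transpose_mul, mul_assoc]
      rw [h2, ← hS, hinv, hS]
      calc (S⁻¹)ᵀ * (Sᵀ * S) * S⁻¹ = (S * S⁻¹)ᵀ * (S * S⁻¹) := by
            simp only [transpose_mul, mul_assoc]
        _ = 1 := by rw [hS2]; simp)
    (by
      intro h
      rw [det_mul, det_mul, hd, mul_one, ← det_mul, hS2, det_one])
  refine ⟨φ, ψ, fun g hg1 hg2 => ?_⟩
  have h2 := h g hg1 hg2
  simp only [hSS] at h2
  calc A g * A g = (S⁻¹ * S) * (A g * A g) * (S⁻¹ * S) := by rw [hS1]; simp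
    _ = S⁻¹ * (S * (A g * A g) * S⁻¹) * S := by simp only [mul_assoc]
    _ = 1 := by rw [h2]; simp [hS1]

lemma mk_eq_iff (B C : GL (Fin 4) ℝ) (h : (QuotientGroup.mk B : PGL 4 ℝ) = QuotientGroup.mk C) :
    ∃ c : ℝ, (B : Matrix (Fin 4) (Fin 4) ℝ) = c • (C : Matrix (Fin 4) (Fin 4) ℝ) := by
  have h2 := QuotientGroup.eq.1 h.symm
  obtain ⟨c, hc⟩ := Matrix.GeneralLinearGroup.mem_center_iff_val_mem_range_scalar.1 h2
  refine ⟨c, ?_⟩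
  have h3 : B = C * (C⁻¹ * B) := by group
  rw [h3, Units.val_mul, ← hc]
  ext i j; simp [mul_comm]

/-- Every finite subgroup of odd order of `PGL(4, ℝ)` is isomorphic to a direct product
of (at most) two cyclic groups. -/
theorem odd_subgroup_PGL4_prod_two_cyclic (H : Subgroup (PGL 4 ℝ)) [Finite H]
    (hodd : Odd (Nat.card H)) :
    ∃ m k : ℕ, Nonempty (H ≃* Multiplicative (ZMod m) × Multiplicative (ZMod k)) := by
  have hlift : ∀ h : H, ∃ (B : GL (Fin 4) ℝ) (c : ℝ), (QuotientGroup.mk B : PGL 4 ℝ) = h ∧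
      c ≠ 0 ∧ (c • (B : Matrix (Fin 4) (Fin 4) ℝ)).det = 1 := by
    intro h
    obtain ⟨B, hB⟩ := QuotientGroup.mk_surjective (h : PGL 4 ℝ)
    have hN : (QuotientGroup.mk (B ^ Nat.card H) : PGL 4 ℝ) = QuotientGroup.mk 1 := by
      rw [QuotientGroup.mk_pow, hB, ← Subgroup.coe_pow, pow_card_eq_one']; rfl
    obtain ⟨c, hc⟩ := mk_eq_iff _ _ hN
    have hdet := congrArg Matrix.det hc
    rw [Units.val_pow_eq_pow_val, det_pow, det_smul, Units.val_one, det_one, Fintype.card_fin,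
      mul_one] at hdet
    have hne : (B : Matrix (Fin 4) (Fin 4) ℝ).det ≠ 0 :=
      ((Matrix.isUnit_iff_isUnit_det _).1 B.isUnit).ne_zero
    have hpos : 0 < (B : Matrix (Fin 4) (Fin 4) ℝ).det := by
      rw [← hodd.pow_pos_iff]
      refine lt_of_le_of_ne ?_ (pow_ne_zero _ hne).symm
      rw [hdet]; positivity
    set d := (B : Matrix (Fin 4) (Fin 4) ℝ).det
    have hs : 0 < Real.sqrt (Real.sqrt d) := Real.sqrt_pos.2 (Real.sqrt_pos.2 hpos)
    refine ⟨B, (Real.sqrt (Real.sqrt d))⁻¹, hB, (inv_pos.2 hs).ne', ?_⟩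
    rw [det_smul, Fintype.card_fin, inv_pow]
    have : Real.sqrt (Real.sqrt d) ^ 4 = d := by
      rw [show (4 : ℕ) = 2 * 2 from rfl, pow_mul, Real.sq_sqrt (Real.sqrt_nonneg _),
        Real.sq_sqrt hpos.le]
    rw [this]; exact inv_mul_cancel₀ hpos.ne'
  choose B c hB hc hdet using hlift
  let A : H → Matrix (Fin 4) (Fin 4) ℝ := fun h => c h • (B h : Matrix (Fin 4) (Fin 4) ℝ)
  have hd : ∀ h, (A h).det = 1 := hdet
  have hsign : ∀ (X Y : Matrix (Fin 4) (Fin 4) ℝ) (s : ℝ), X.det = 1 → Y.det = 1 → X = s • Y →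
      X = Y ∨ X = -Y := by
    intro X Y s hX hY h
    have h2 := congrArg Matrix.det h
    rw [det_smul, hX, hY, Fintype.card_fin, mul_one] at h2
    have h3 : s = 1 ∨ s = -1 := by
      have h4 : (s ^ 2 - 1) * (s ^ 2 + 1) = 0 := by linear_combination -h2
      have h5 : s ^ 2 = 1 := by nlinarith [sq_nonneg s, (mul_eq_zero.1 h4).resolve_right (by positivity)]
      exact sq_eq_one_iff.1 h5
    rcases h3 with rfl | rfl
    · left; simpa using h
    · right; simpa using h
  have hmul : ∀ h k, A h * A k = A (h * k) ∨ A h * A k = - A (h * k) := by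
    intro h k
    have h2 : (QuotientGroup.mk (B h * B k) : PGL 4 ℝ) = QuotientGroup.mk (B (h * k)) := by
      rw [QuotientGroup.mk_mul, hB, hB, hB]; rfl
    obtain ⟨s, hs⟩ := mk_eq_iff _ _ h2
    rw [Units.val_mul] at hs
    refine hsign _ _ (c h * c k * s * (c (h * k))⁻¹) (by rw [det_mul, hd, hd, one_mul]) (hd _) ?_
    simp only [A]
    rw [smul_mul_smul_comm, hs, smul_smul, smul_smul, inv_mul_cancel_right₀ (hc _)]
  have h1 : A 1 = 1 ∨ A 1 = -1 := by
    have hu : IsUnit (A 1) := (Matrix.isUnit_iff_isUnit_det _).2 (by rw [hd]; exact isUnit_one)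
    have h2 := hmul 1 1
    rw [mul_one (1 : H)] at h2
    rcases h2 with h2 | h2
    · left; exact hu.mul_left_cancel (by rw [h2, mul_one])
    · right; exact hu.mul_left_cancel (by rw [h2]; simp)
  obtain ⟨φ, ψ, hφψ⟩ := sl_embed hodd A h1 hmul hd
  refine of_embed φ ψ (fun g hg1 hg2 => ?_)
  have h2 := hφψ g hg1 hg2
  have h3 : g ^ 2 = 1 := by
    apply Subtype.ext
    rw [Subgroup.coe_pow, ← hB g, ← QuotientGroup.mk_pow]
    refine (QuotientGroup.eq_one_iff _).2 ?_
    rw [Matrix.GeneralLinearGroup.mem_center_iff_val_mem_range_scalar]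
    refine ⟨((c g) ^ 2)⁻¹, ?_⟩
    simp only [A] at h2
    rw [smul_mul_smul_comm, ← pow_two, ← pow_two] at h2
    rw [Units.val_pow_eq_pow_val, ← inv_smul_smul₀ (pow_ne_zero 2 (hc g)) ((B g : Matrix (Fin 4) (Fin 4) ℝ) ^ 2), h2]
    ext i j; simp [Matrix.smul_apply, Matrix.one_apply, diagonal_apply]
  have h4 : orderOf g ∣ 2 := orderOf_dvd_of_pow_eq_one h3
  have h5 : orderOf g ∣ Nat.card H := orderOf_dvd_natCard g
  have h6 : orderOf g = 1 := Nat.eq_one_of_dvd_coprimes hodd.coprime_two_left h4 h5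
  exact orderOf_eq_one_iff.1 h6
end

section
/- Let G be a group of odd order acting faithfully on a surface X with a G-equivariant quotient structure where the automorphism group decomposes as Aut(ℙ¹×ℙ¹) = (PGL(2,ℝ) × PGL(2,ℝ)) ⋊ ℤ/2ℤ. Then G is contained in PGL(2,ℝ) × PGL(2,ℝ), and hence G is isomorphic to a subgroup of a product of two cyclic groups of odd order; in particular G is a direct product of at most two cyclic groups. -/
open Matrix

theorem aux_two_gen {H : Type*} [CommGroup H] [Finite H] (x y : H)
    (h : ∀ g : H, ∃ a b : ℤ, g = x ^ a * y ^ b) :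
    ∃ m k : ℕ, Nonempty (H ≃* Multiplicative (ZMod m) × Multiplicative (ZMod k)) := by
  let F : (Fin 2 → ℤ) →ₗ[ℤ] Additive H :=
    (LinearMap.proj 0 : (Fin 2 → ℤ) →ₗ[ℤ] ℤ).smulRight (Additive.ofMul x) +
    (LinearMap.proj 1 : (Fin 2 → ℤ) →ₗ[ℤ] ℤ).smulRight (Additive.ofMul y)
  have hF : Function.Surjective F := by
    intro g
    obtain ⟨a, b, hab⟩ := h g.toMul
    refine ⟨![a, b], ?_⟩
    apply Additive.toMul.injective
    simp [F, hab]
  let e1 := F.quotKerEquivOfSurjective hF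
  have hfin : Finite ((Fin 2 → ℤ) ⧸ LinearMap.ker F) :=
    Finite.of_equiv (Additive H) e1.symm.toEquiv
  have hr := (Submodule.finiteQuotient_iff (LinearMap.ker F)).1 hfin
  let e2 := (LinearMap.ker F).quotientEquivPiZMod (Pi.basisFun ℤ (Fin 2)) hr
  let e3 := e1.symm.toAddEquiv.trans e2
  refine ⟨_, _, ⟨MulEquiv.mk' (Equiv.trans (Equiv.trans Additive.ofMul e3.toEquiv)
    (piFinTwoEquiv _)) ?_⟩⟩
  intro a b
  have : e3 (Additive.ofMul (a * b)) = e3 (Additive.ofMul a) + e3 (Additive.ofMul b) := by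
    rw [ofMul_mul, map_add]
  apply Prod.ext
  · exact congrFun this 0
  · exact congrFun this 1

theorem aux_prod {H K1 K2 : Type*} [Group H] [Finite H] [Group K1] [Group K2]
    [IsCyclic K1] [IsCyclic K2] (f : H →* K1) (g : H →* K2)
    (hfg : ∀ h, f h = 1 → g h = 1 → h = 1) :
    ∃ m k : ℕ, Nonempty (H ≃* Multiplicative (ZMod m) × Multiplicative (ZMod k)) := by
  letI : CommGroup H := { (inferInstance : Group H) with
    mul_comm := by
      intro a b
      have : a * b * (b * a)⁻¹ = 1 := by
        apply hfg
        · rw [map_mul, map_inv, map_mul, map_mul, mul_inv_eq_one]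
          exact IsMulCommutative.is_comm.comm _ _
        · rw [map_mul, map_inv, map_mul, map_mul, mul_inv_eq_one]
          exact IsMulCommutative.is_comm.comm _ _
      exact mul_inv_eq_one.1 this }
  have hinj : Function.Injective (g.comp f.ker.subtype) := by
    rw [injective_iff_map_eq_one]
    intro a ha
    exact Subtype.ext (hfg _ a.2 ha)
  haveI : IsCyclic f.ker := isCyclic_of_injective _ hinj
  obtain ⟨⟨_, x, rfl⟩, hx⟩ := IsCyclic.exists_generator (α := f.range)
  obtain ⟨y, hy⟩ := IsCyclic.exists_generator (α := f.ker)
  refine aux_two_gen x y.1 fun c => ?_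
  obtain ⟨a, ha⟩ := Subgroup.mem_zpowers_iff.1 (hx ⟨f c, c, rfl⟩)
  have ha' : f x ^ a = f c := by simpa using congrArg Subtype.val ha
  obtain ⟨b, hb⟩ := Subgroup.mem_zpowers_iff.1
    (hy ⟨(x ^ a)⁻¹ * c, by rw [MonoidHom.mem_ker]; simp [ha']⟩)
  have hb' : (y.1) ^ b = (x ^ a)⁻¹ * c := by simpa using congrArg Subtype.val hb
  exact ⟨a, b, by rw [hb']; simp⟩

theorem aux_pgl_eq {g h : GL (Fin 2) ℝ} (hgh : (QuotientGroup.mk g : PGL 2 ℝ) = QuotientGroup.mk h) :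
    ∃ t : ℝ, t ≠ 0 ∧ h.val = t • g.val := by
  rw [QuotientGroup.eq, GeneralLinearGroup.mem_center_iff_val_mem_range_scalar] at hgh
  obtain ⟨t, ht⟩ := hgh
  have h1 : h.val = t • g.val := by
    have : h.val = g.val * (g⁻¹ * h).val := by
      rw [← Units.val_mul]; simp
    rw [this, ← ht]
    simp [Matrix.scalar_apply, ← Matrix.smul_one_eq_diagonal]
  refine ⟨t, ?_, h1⟩
  rintro rfl
  have := (Matrix.isUnit_iff_isUnit_det _).1 h.isUnit
  rw [h1] at this
  simp at this

theorem aux_det_pos {g : GL (Fin 2) ℝ} {n : ℕ} (hn : Odd n)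
    (h : (QuotientGroup.mk g : PGL 2 ℝ) ^ n = 1) : 0 < g.val.det := by
  have h' : (QuotientGroup.mk 1 : PGL 2 ℝ) = QuotientGroup.mk (g ^ n) := by
    rw [QuotientGroup.mk_pow, h]; rfl
  obtain ⟨t, ht, h1⟩ := aux_pgl_eq h'
  have h2 : g.val.det ^ n = t ^ 2 := by
    rw [← Matrix.det_pow, ← Units.val_pow_eq_pow_val, h1]
    simp [Matrix.det_smul]
  have h3 : 0 < g.val.det ^ n := by rw [h2]; positivity
  exact hn.pow_pos_iff.1 h3

/-- Scale invariant quadratic form. -/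
noncomputable def auxT (g : GL (Fin 2) ℝ) : Matrix (Fin 2) (Fin 2) ℝ :=
  (g.val.det)⁻¹ • (g.valᵀ * g.val)

theorem auxT_eq {g h : GL (Fin 2) ℝ} (hgh : (QuotientGroup.mk g : PGL 2 ℝ) = QuotientGroup.mk h) :
    auxT g = auxT h := by
  obtain ⟨t, ht, h1⟩ := aux_pgl_eq hgh
  have : g.val.det ≠ 0 := ((Matrix.isUnit_iff_isUnit_det _).1 g.isUnit).ne_zero
  unfold auxT
  rw [h1, Matrix.det_smul]
  simp only [Fintype.card_fin, Matrix.transpose_smul, Matrix.smul_mul, Matrix.mul_smul, smul_smul]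
  congr 1
  field_simp

theorem auxT_mul (g h : GL (Fin 2) ℝ) :
    h.val.det • auxT (g * h) = h.valᵀ * auxT g * h.val := by
  have : h.val.det ≠ 0 := ((Matrix.isUnit_iff_isUnit_det _).1 h.isUnit).ne_zero
  unfold auxT
  simp only [Units.val_mul, Matrix.det_mul, Matrix.transpose_mul, Matrix.mul_smul,
    Matrix.smul_mul, smul_smul, Matrix.mul_assoc]
  congr 1
  field_simp

theorem auxT_posDef {g : GL (Fin 2) ℝ} (hg : 0 < g.val.det) : (auxT g).PosDef := by
  unfold auxT
  refine Matrix.PosDef.smul ?_ (inv_pos.2 hg)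
  have := Matrix.PosDef.conjTranspose_mul_self g.val (Matrix.mulVec_injective_of_isUnit g.isUnit)
  simpa using this

theorem aux_form (K : Subgroup (PGL 2 ℝ)) [Finite K]
    (hdet : ∀ g : GL (Fin 2) ℝ, (QuotientGroup.mk g : PGL 2 ℝ) ∈ K → 0 < g.val.det) :
    ∃ S : Matrix (Fin 2) (Fin 2) ℝ, S.PosDef ∧
      ∀ g : GL (Fin 2) ℝ, (QuotientGroup.mk g : PGL 2 ℝ) ∈ K →
        g.valᵀ * S * g.val = g.val.det • S := by
  classical
  haveI := Fintype.ofFinite K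
  refine ⟨∑ k : K, auxT (Quotient.out k.1), ?_, ?_⟩
  · refine Matrix.posDef_sum Finset.univ_nonempty fun k _ => auxT_posDef (hdet _ ?_)
    have : (QuotientGroup.mk (Quotient.out k.1) : PGL 2 ℝ) = k.1 := Quotient.out_eq _
    rw [this]; exact k.2
  · intro g hg
    rw [Finset.mul_sum, Finset.sum_mul, Finset.smul_sum]
    rw [← Equiv.sum_comp (Equiv.mulRight (⟨_, hg⟩ : K))
      (fun k : K => g.val.det • auxT (Quotient.out k.1))]
    refine Finset.sum_congr rfl fun k _ => ?_
    rw [← auxT_mul]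
    congr 1
    apply auxT_eq
    rw [QuotientGroup.mk_mul]
    have hout : ∀ k : PGL 2 ℝ, (QuotientGroup.mk (Quotient.out k) : PGL 2 ℝ) = k :=
      fun k => Quotient.out_eq _
    rw [hout, hout]
    rfl

theorem aux_fix (K : Subgroup (PGL 2 ℝ)) [Finite K]
    (hdet : ∀ g : GL (Fin 2) ℝ, (QuotientGroup.mk g : PGL 2 ℝ) ∈ K → 0 < g.val.det) :
    ∃ z : ℂ, 0 < z.im ∧ ∀ g : GL (Fin 2) ℝ, (QuotientGroup.mk g : PGL 2 ℝ) ∈ K →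
      (g.val 0 0 : ℂ) * z + g.val 0 1 = z * (g.val 1 0 * z + g.val 1 1) := by
  obtain ⟨S, hS, hinv⟩ := aux_form K hdet
  have hp : 0 < S 0 0 := hS.diag_pos
  have hd := hS.det_pos
  have hsymm : S 1 0 = S 0 1 := by simpa using hS.isHermitian.apply 0 1
  rw [Matrix.det_fin_two, hsymm] at hd
  set p := S 0 0 with hpdef
  set q := S 0 1 with hqdef
  set r := S 1 1 with hrdef
  set s := √(p * r - q * q) with hsdef
  have hs : 0 < s := Real.sqrt_pos.2 hd
  have hs2 : s * s = p * r - q * q := Real.mul_self_sqrt hd.le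
  refine ⟨⟨-q / p, s / p⟩, by simpa using div_pos hs hp, ?_⟩
  intro g hg
  have hD := hdet g hg
  have hE := hinv g hg
  rw [Matrix.det_fin_two] at hD
  have e00 := congrFun (congrFun hE 0) 0
  have e01 := congrFun (congrFun hE 0) 1
  have e10 := congrFun (congrFun hE 1) 0
  have e11 := congrFun (congrFun hE 1) 1
  simp only [Matrix.mul_apply, Fin.sum_univ_two, Matrix.transpose_apply, Matrix.smul_apply,
    smul_eq_mul, Matrix.det_fin_two, hsymm, ← hpdef, ← hqdef, ← hrdef] at e00 e01 e10 e11
  set a := g.val 0 0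
  set b := g.val 0 1
  set c := g.val 1 0
  set d := g.val 1 1
  have k1 : p * (a - d) = -2 * q * c := by
    apply mul_left_cancel₀ hD.ne'
    linear_combination d * e00 - c * e10
  have k2 : p * b = - c * r := by
    apply mul_left_cancel₀ hD.ne'
    linear_combination d * e01 - c * e11
  have hp' := hp.ne'
  apply Complex.ext
  · simp
    field_simp
    linear_combination p * k2 - q * k1 + c * hs2
  · simp
    field_simp
    linear_combination k1

theorem aux_cyclic (K : Subgroup (PGL 2 ℝ)) [Finite K] (hodd : Odd (Nat.card K)) :
    IsCyclic K := by
  have hdet : ∀ g : GL (Fin 2) ℝ, (QuotientGroup.mk g : PGL 2 ℝ) ∈ K → 0 < g.val.det := by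
    intro g hg
    refine aux_det_pos hodd ?_
    have := pow_card_eq_one' (x := (⟨_, hg⟩ : K))
    exact congrArg Subtype.val this
  obtain ⟨z, hz, hfix⟩ := aux_fix K hdet
  let X0 : GL (Fin 2) ℝ → ℂ := fun g => (g.val 1 0 * z + g.val 1 1) ^ 2 / (g.val.det : ℝ)
  have hX0 : ∀ g h : GL (Fin 2) ℝ, (QuotientGroup.mk g : PGL 2 ℝ) = QuotientGroup.mk h →
      X0 g = X0 h := by
    intro g h hgh
    obtain ⟨t, ht, h1⟩ := aux_pgl_eq hgh
    have : g.val.det ≠ 0 := ((Matrix.isUnit_iff_isUnit_det _).1 g.isUnit).ne_zero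
    have h2 : (g.val.det : ℂ) ≠ 0 := by exact_mod_cast this
    have h3 : (t : ℂ) ≠ 0 := by exact_mod_cast ht
    simp only [X0, h1, Matrix.det_smul, Matrix.smul_apply, smul_eq_mul, Fintype.card_fin]
    push_cast
    field_simp
  have hone : X0 1 = 1 := by simp [X0]
  have hmul : ∀ g h : GL (Fin 2) ℝ, (QuotientGroup.mk h : PGL 2 ℝ) ∈ K →
      X0 (g * h) = X0 g * X0 h := by
    intro g h hh
    have h1 := hfix h hh
    simp only [X0, Units.val_mul, Matrix.det_mul, Matrix.mul_apply, Fin.sum_univ_two]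
    push_cast
    rw [div_mul_div_comm, ← mul_pow]
    congr 2
    linear_combination (g.val 1 0 : ℂ) * h1
  have hout : ∀ k : PGL 2 ℝ, (QuotientGroup.mk (Quotient.out k) : PGL 2 ℝ) = k :=
    fun k => Quotient.out_eq _
  let X : K →* ℂ :=
    { toFun := fun k => X0 (Quotient.out k.1)
      map_one' := by
        rw [← hone]
        apply hX0
        rw [hout]; rfl
      map_mul' := by
        intro k l
        rw [← hmul _ _ (by rw [hout]; exact l.2)]
        apply hX0
        rw [QuotientGroup.mk_mul, hout, hout, hout]; rfl }
  refine isCyclic_of_subgroup_isDomain X ?_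
  rw [injective_iff_map_eq_one]
  intro k hk
  have hk : X0 (Quotient.out k.1) = 1 := hk
  have hm : (QuotientGroup.mk (Quotient.out k.1) : PGL 2 ℝ) ∈ K := by rw [hout]; exact k.2
  apply Subtype.ext
  rw [← hout k.1]
  generalize Quotient.out k.1 = g at hk hm
  have hD := hdet g hm
  have hf := hfix g hm
  have hDc : (g.val.det : ℂ) ≠ 0 := by exact_mod_cast hD.ne'
  simp only [X0] at hk
  rw [div_eq_one_iff_eq hDc] at hk
  have him := congrArg Complex.im hk
  have hre := congrArg Complex.re hk
  simp [pow_two] at him hre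
  have fim := congrArg Complex.im hf
  have fre := congrArg Complex.re hf
  simp at fim fre
  have hc : g.val 1 0 = 0 := by
    by_contra hc
    have h1 : g.val 1 0 * z.re + g.val 1 1 = 0 := by
      have : (g.val 1 0 * z.im) * (g.val 1 0 * z.re + g.val 1 1) = 0 := by linarith
      exact (mul_eq_zero.1 this).resolve_left (mul_ne_zero hc hz.ne')
    rw [h1] at hre
    nlinarith [mul_self_nonneg (g.val 1 0 * z.im)]
  rw [hc] at fim fre
  have had : g.val 0 0 = g.val 1 1 := by
    have : (g.val 0 0 - g.val 1 1) * z.im = 0 := by linarith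
    linarith [(mul_eq_zero.1 this).resolve_right hz.ne']
  have hb : g.val 0 1 = 0 := by rw [had] at fre; linarith
  change (QuotientGroup.mk g : PGL 2 ℝ) = 1
  rw [QuotientGroup.eq_one_iff, GeneralLinearGroup.mem_center_iff_val_mem_range_scalar]
  refine ⟨g.val 1 1, ?_⟩
  ext i j
  fin_cases i <;> fin_cases j <;> simp [hc, hb, had]

/-- Let `A` be a group (such as `Aut(ℙ¹×ℙ¹) = (PGL(2,ℝ) × PGL(2,ℝ)) ⋊ ℤ/2ℤ`) containing a
normal subgroup `N ≅ PGL(2,ℝ) × PGL(2,ℝ)` with quotient `ℤ/2ℤ`. Then every finite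
subgroup `H` of `A` of odd order is contained in `N ≅ PGL(2,ℝ) × PGL(2,ℝ)`, and `H` is
isomorphic to a direct product of (at most) two cyclic groups. -/
theorem odd_subgroup_of_aut_P1xP1 {A : Type*} [Group A]
    (N : Subgroup A) [N.Normal]
    (e : N ≃* (PGL 2 ℝ × PGL 2 ℝ))
    (hquot : Nonempty ((A ⧸ N) ≃* Multiplicative (ZMod 2)))
    (H : Subgroup A) [Finite H] (hodd : Odd (Nat.card H)) :
    H ≤ N ∧
      ∃ m k : ℕ, Nonempty (H ≃* Multiplicative (ZMod m) × Multiplicative (ZMod k)) := by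
  have hle : H ≤ N := by
    obtain ⟨q⟩ := hquot
    intro h hh
    have hn : h ^ Nat.card H = 1 := by
      have := pow_card_eq_one' (x := (⟨h, hh⟩ : H))
      exact congrArg Subtype.val this
    have h2 : ∀ x : Multiplicative (ZMod 2), x ^ 2 = 1 := by decide
    have h3 : (QuotientGroup.mk h : A ⧸ N) ^ 2 = 1 := by
      apply q.injective
      rw [map_pow, h2, map_one]
    have h4 : (QuotientGroup.mk h : A ⧸ N) ^ Nat.card H = 1 := by
      rw [← QuotientGroup.mk_pow, hn]; rfl
    rw [← QuotientGroup.eq_one_iff]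
    obtain ⟨j, hj⟩ := hodd
    rwa [hj, pow_succ, pow_mul, h3, one_pow, one_mul] at h4
  refine ⟨hle, ?_⟩
  let φ : H →* PGL 2 ℝ × PGL 2 ℝ := e.toMonoidHom.comp (Subgroup.inclusion hle)
  have hφ : Function.Injective φ := e.injective.comp (Subgroup.inclusion_injective hle)
  let f : H →* PGL 2 ℝ := (MonoidHom.fst _ _).comp φ
  let g : H →* PGL 2 ℝ := (MonoidHom.snd _ _).comp φ
  have hcyc : ∀ f : H →* PGL 2 ℝ, IsCyclic f.range := fun f =>
    haveI : Finite f.range := Finite.of_surjective _ f.rangeRestrict_surjective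
    aux_cyclic _ (hodd.of_dvd_nat (Subgroup.card_range_dvd f))
  haveI := hcyc f
  haveI := hcyc g
  refine aux_prod f.rangeRestrict g.rangeRestrict fun h h1 h2 => ?_
  have h1' : (φ h).1 = 1 := congrArg Subtype.val h1
  have h2' : (φ h).2 = 1 := congrArg Subtype.val h2
  apply hφ
  rw [map_one]
  exact Prod.ext h1' h2'
end
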